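/- The set of 48 quaternions consisting of {±1, ±i, ±j, ±k, ½(±1±i±j±k)} together with the 24 quaternions of the form (±1±i)/√2 and all permutations of coordinates with exactly two nonzero entries equal to ±1/√2, is closed under quaternion multiplication and forms a group of order 48 (the binary octahedral group), and as vectors in ℝ⁴ forms the F₄ root system (a root system in the generalized sense). -/

import Mathlib

open Quaternion

/-- The binary tetrahedral group as a set of quaternions. -/
def binTet : Set ℍ[ℝ] :=
  {q | (∃ ε : ℝ, (ε = 1 ∨ ε = -1) ∧
          (q = ⟨ε, 0, 0, 0⟩ ∨ q = ⟨0, ε, 0, 0⟩ ∨ q = ⟨0, 0, ε, 0⟩ ∨ q = ⟨0, 0, 0, ε⟩)) ∨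
       (∃ a b c d : ℝ,
          (a = 1/2 ∨ a = -(1/2)) ∧ (b = 1/2 ∨ b = -(1/2)) ∧
          (c = 1/2 ∨ c = -(1/2)) ∧ (d = 1/2 ∨ d = -(1/2)) ∧ q = ⟨a, b, c, d⟩)}

/-- The quaternion basis `e₁ = 1, e₂ = i, e₃ = j, e₄ = k`. -/
noncomputable def quatBasis : Fin 4 → ℍ[ℝ] := ![1, ⟨0,1,0,0⟩, ⟨0,0,1,0⟩, ⟨0,0,0,1⟩]

/-- The 24 quaternions `(±e_a ± e_b)/√2` for `a < b`. -/
def octExtra : Set ℍ[ℝ] :=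
  {q | ∃ a b : Fin 4, a < b ∧ ∃ ε η : ℝ, (ε = 1 ∨ ε = -1) ∧ (η = 1 ∨ η = -1) ∧
        q = (Real.sqrt 2)⁻¹ • (ε • quatBasis a + η • quatBasis b)}

/-- Coordinates in `ℤ[√2]` of twice a quaternion. -/
abbrev Coord := (ℤ√2) × (ℤ√2) × (ℤ√2) × (ℤ√2)

/-- The two signs. -/
def signs : List ℤ := [1, -1]

def listA : List Coord :=
  signs.flatMap fun e => [(⟨2*e,0⟩,0,0,0), (0,⟨2*e,0⟩,0,0), (0,0,⟨2*e,0⟩,0), (0,0,0,⟨2*e,0⟩)]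

def listB : List Coord :=
  signs.flatMap fun a => signs.flatMap fun b => signs.flatMap fun c => signs.map fun d =>
    (⟨a,0⟩,⟨b,0⟩,⟨c,0⟩,⟨d,0⟩)

def listC : List Coord :=
  signs.flatMap fun e => signs.flatMap fun n =>
    [(⟨0,e⟩,⟨0,n⟩,0,0), (⟨0,e⟩,0,⟨0,n⟩,0), (⟨0,e⟩,0,0,⟨0,n⟩),
     (0,⟨0,e⟩,⟨0,n⟩,0), (0,⟨0,e⟩,0,⟨0,n⟩), (0,0,⟨0,e⟩,⟨0,n⟩)]

def listAll : List Coord := listA ++ (listB ++ listC)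

/-- The quaternion product on coordinates. -/
def cmul (p q : Coord) : Coord :=
  (p.1*q.1 - p.2.1*q.2.1 - p.2.2.1*q.2.2.1 - p.2.2.2*q.2.2.2,
   p.1*q.2.1 + p.2.1*q.1 + p.2.2.1*q.2.2.2 - p.2.2.2*q.2.2.1,
   p.1*q.2.2.1 - p.2.1*q.2.2.2 + p.2.2.1*q.1 + p.2.2.2*q.2.1,
   p.1*q.2.2.2 + p.2.1*q.2.2.1 - p.2.2.1*q.2.1 + p.2.2.2*q.1)

def cdouble (p : Coord) : Coord := (p.1+p.1, p.2.1+p.2.1, p.2.2.1+p.2.2.1, p.2.2.2+p.2.2.2)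

def cneg (p : Coord) : Coord := (-p.1, -p.2.1, -p.2.2.1, -p.2.2.2)

def cstar (p : Coord) : Coord := (p.1, -p.2.1, -p.2.2.1, -p.2.2.2)

/-- Generators `1, i, j, s = (1+i)/√2, t = (1+i+j+k)/2`. -/
def gens : List Coord :=
  [(⟨2,0⟩,0,0,0), (0,⟨2,0⟩,0,0), (0,0,⟨2,0⟩,0), (⟨0,1⟩,⟨0,1⟩,0,0), (⟨1,0⟩,⟨1,0⟩,⟨1,0⟩,⟨1,0⟩)]

/-- `1, i, j, -1`. -/
def gensA : List Coord :=
  [(⟨2,0⟩,0,0,0), (0,⟨2,0⟩,0,0), (0,0,⟨2,0⟩,0), (⟨-2,0⟩,0,0,0)]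

/-- `1, s, t, st`. -/
def gensR : List Coord :=
  [(⟨2,0⟩,0,0,0), (⟨0,1⟩,⟨0,1⟩,0,0), (⟨1,0⟩,⟨1,0⟩,⟨1,0⟩,⟨1,0⟩), (0,⟨0,1⟩,0,⟨0,1⟩)]

/-- Coset representatives `1, t, t², s, st, st²` of the quaternion group of order 8. -/
def reps : List Coord :=
  [(⟨2,0⟩,0,0,0), (⟨1,0⟩,⟨1,0⟩,⟨1,0⟩,⟨1,0⟩), (⟨-1,0⟩,⟨1,0⟩,⟨1,0⟩,⟨1,0⟩),
   (⟨0,1⟩,⟨0,1⟩,0,0), (0,⟨0,1⟩,0,⟨0,1⟩), (⟨0,-1⟩,0,0,⟨0,1⟩)]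

theorem gens_mul : ∀ p ∈ gens, ∀ q ∈ listAll, ∃ r ∈ listAll, cmul p q = cdouble r := by
  decide +kernel

theorem gensA_fact : ∀ p ∈ gensA, ∃ x ∈ gens, ∃ y ∈ gens, cmul x y = cdouble p := by
  decide +kernel

theorem listA_fact : ∀ p ∈ listA, ∃ x ∈ gensA, ∃ y ∈ gensA, cmul x y = cdouble p := by
  decide +kernel

theorem gensR_fact : ∀ p ∈ gensR, ∃ x ∈ gens, ∃ y ∈ gens, cmul x y = cdouble p := by
  decide +kernel

theorem reps_fact : ∀ p ∈ reps, ∃ x ∈ gensR, ∃ y ∈ gensR, cmul x y = cdouble p := by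
  decide +kernel

theorem listAll_fact : ∀ p ∈ listAll, ∃ x ∈ listA, ∃ y ∈ reps, cmul x y = cdouble p := by
  decide +kernel

theorem list_neg : ∀ p ∈ listAll, cneg p ∈ listAll := by decide +kernel

theorem list_star : ∀ p ∈ listAll, cstar p ∈ listAll := by decide +kernel

theorem list_norm : ∀ p ∈ listAll,
    p.1*p.1 + p.2.1*p.2.1 + p.2.2.1*p.2.2.1 + p.2.2.2*p.2.2.2 = 4 := by decide +kernel

theorem list_nodup : listAll.Nodup := by decide +kernel

/-- The embedding of `ℤ[√2]` in the reals. -/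
noncomputable def emb : (ℤ√2) →+* ℝ :=
  Zsqrtd.lift ⟨√2, by norm_num⟩

theorem emb_mk (a b : ℤ) : emb ⟨a, b⟩ = a + b * √2 := by
  simp [emb]

theorem emb_injective : Function.Injective emb := by
  apply Zsqrtd.lift_injective
  intro n h
  have : IsSquare (2:ℤ) := ⟨n, h⟩
  exact (by decide +kernel : ¬ IsSquare (2:ℤ)) this

noncomputable def toQ (p : Coord) : ℍ[ℝ] :=
  ⟨emb p.1 / 2, emb p.2.1 / 2, emb p.2.2.1 / 2, emb p.2.2.2 / 2⟩

theorem toQ_re (p : Coord) : (toQ p).re = emb p.1 / 2 := rfl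
theorem toQ_imI (p : Coord) : (toQ p).imI = emb p.2.1 / 2 := rfl
theorem toQ_imJ (p : Coord) : (toQ p).imJ = emb p.2.2.1 / 2 := rfl
theorem toQ_imK (p : Coord) : (toQ p).imK = emb p.2.2.2 / 2 := rfl

theorem quatBasis_re (a : Fin 4) : (quatBasis a).re = if a = 0 then 1 else 0 := by
  fin_cases a <;> rfl
theorem quatBasis_imI (a : Fin 4) : (quatBasis a).imI = if a = 1 then 1 else 0 := by
  fin_cases a <;> rfl
theorem quatBasis_imJ (a : Fin 4) : (quatBasis a).imJ = if a = 2 then 1 else 0 := by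
  fin_cases a <;> rfl
theorem quatBasis_imK (a : Fin 4) : (quatBasis a).imK = if a = 3 then 1 else 0 := by
  fin_cases a <;> rfl

theorem toQ_injective : Function.Injective toQ := by
  rintro ⟨a, b, c, d⟩ ⟨a', b', c', d'⟩ h
  have h1 := congrArg QuaternionAlgebra.re h
  have h2 := congrArg QuaternionAlgebra.imI h
  have h3 := congrArg QuaternionAlgebra.imJ h
  have h4 := congrArg QuaternionAlgebra.imK h
  simp only [toQ] at h1 h2 h3 h4
  have e1 := emb_injective (by linarith : emb a = emb a')
  have e2 := emb_injective (by linarith : emb b = emb b')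
  have e3 := emb_injective (by linarith : emb c = emb c')
  have e4 := emb_injective (by linarith : emb d = emb d')
  rw [e1, e2, e3, e4]

theorem toQ_mul {p q r : Coord} (h : cmul p q = cdouble r) : toQ p * toQ q = toQ r := by
  obtain ⟨a, b, c, d⟩ := p
  obtain ⟨a', b', c', d'⟩ := q
  obtain ⟨x, y, z, w⟩ := r
  simp only [cmul, cdouble, Prod.mk.injEq] at h
  obtain ⟨h1, h2, h3, h4⟩ := h
  replace h1 := congrArg emb h1
  replace h2 := congrArg emb h2
  replace h3 := congrArg emb h3
  replace h4 := congrArg emb h4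
  simp only [map_add, map_sub, map_mul] at h1 h2 h3 h4
  ext
  · simp [toQ_re, toQ_imI, toQ_imJ, toQ_imK]; linarith
  · simp [toQ_re, toQ_imI, toQ_imJ, toQ_imK]; linarith
  · simp [toQ_re, toQ_imI, toQ_imJ, toQ_imK]; linarith
  · simp [toQ_re, toQ_imI, toQ_imJ, toQ_imK]; linarith

theorem toQ_neg (p : Coord) : toQ (cneg p) = - toQ p := by
  ext <;> simp [toQ_re, toQ_imI, toQ_imJ, toQ_imK, cneg] <;> ring

theorem toQ_star (p : Coord) : toQ (cstar p) = star (toQ p) := by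
  ext <;> simp [toQ_re, toQ_imI, toQ_imJ, toQ_imK, cstar] <;> ring

theorem toQ_normSq {p : Coord} (hp : p ∈ listAll) : normSq (toQ p) = 1 := by
  have h := congrArg emb (list_norm p hp)
  simp only [map_add, map_mul, map_ofNat] at h
  rw [Quaternion.normSq_def']
  simp only [toQ]
  linarith

theorem inv_sqrt_two : (√2)⁻¹ = √2 / 2 := by
  have : √2 * √2 = 2 := by norm_num
  field_simp
  linarith

theorem sign_cast {x : ℝ} (h : x = 1 ∨ x = -1) : ∃ e ∈ signs, x = ((e : ℤ) : ℝ) := by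
  rcases h with rfl | rfl
  · exact ⟨1, by simp [signs], by simp⟩
  · exact ⟨-1, by simp [signs], by simp⟩

theorem sign_cast_half {x : ℝ} (h : x = 1/2 ∨ x = -(1/2)) :
    ∃ e ∈ signs, x = ((e : ℤ) : ℝ) / 2 := by
  rcases h with rfl | rfl
  · exact ⟨1, by simp [signs], by simp⟩
  · exact ⟨-1, by simp [signs], by simp; ring⟩

theorem sign_real {e : ℤ} (h : e ∈ signs) : (e : ℝ) = 1 ∨ (e : ℝ) = -1 := by
  simp only [signs, List.mem_cons, List.not_mem_nil, or_false] at h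
  rcases h with rfl | rfl <;> simp

theorem sign_real_half {e : ℤ} (h : e ∈ signs) : (e : ℝ)/2 = 1/2 ∨ (e : ℝ)/2 = -(1/2) := by
  rcases sign_real h with h | h <;> rw [h] <;> norm_num

theorem emb_zero_div : emb 0 / 2 = 0 := by simp

theorem emb_two (e : ℤ) : emb ⟨2*e, 0⟩ / 2 = e := by rw [emb_mk]; push_cast; ring

theorem emb_one (e : ℤ) : emb ⟨e, 0⟩ / 2 = (e : ℝ) / 2 := by rw [emb_mk]; push_cast; ring

theorem emb_sqrt (e : ℤ) : emb ⟨0, e⟩ / 2 = (√2)⁻¹ * e := by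
  rw [emb_mk, inv_sqrt_two]; push_cast; ring

theorem mem_iff (q : ℍ[ℝ]) : q ∈ binTet ∪ octExtra ↔ ∃ p ∈ listAll, toQ p = q := by
  constructor
  · rintro ((⟨x, hx, h⟩ | ⟨a, b, c, d, hax, hbx, hcx, hdx, rfl⟩) | ⟨a, b, hab, x, y, hx, hy, rfl⟩)
    · obtain ⟨e, he, rfl⟩ := sign_cast hx
      have key : ∀ p ∈ [((⟨2*e,0⟩,0,0,0) : Coord), (0,⟨2*e,0⟩,0,0), (0,0,⟨2*e,0⟩,0),
          (0,0,0,⟨2*e,0⟩)], p ∈ listAll := fun p hp =>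
        List.mem_append_left _ (List.mem_flatMap.2 ⟨e, he, hp⟩)
      rcases h with rfl | rfl | rfl | rfl
      · exact ⟨_, key (⟨2*e,0⟩,0,0,0) (by simp), by simp only [toQ, emb_two, emb_zero_div]; rfl⟩
      · exact ⟨_, key (0,⟨2*e,0⟩,0,0) (by simp), by simp only [toQ, emb_two, emb_zero_div]; rfl⟩
      · exact ⟨_, key (0,0,⟨2*e,0⟩,0) (by simp), by simp only [toQ, emb_two, emb_zero_div]; rfl⟩
      · exact ⟨_, key (0,0,0,⟨2*e,0⟩) (by simp), by simp only [toQ, emb_two, emb_zero_div]; rfl⟩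
    · obtain ⟨a, ha, rfl⟩ := sign_cast_half hax
      obtain ⟨b, hb, rfl⟩ := sign_cast_half hbx
      obtain ⟨c, hc, rfl⟩ := sign_cast_half hcx
      obtain ⟨d, hd, rfl⟩ := sign_cast_half hdx
      refine ⟨(⟨a,0⟩,⟨b,0⟩,⟨c,0⟩,⟨d,0⟩), ?_, by simp only [toQ, emb_one]; rfl⟩
      refine List.mem_append_right _ (List.mem_append_left _ ?_)
      exact List.mem_flatMap.2 ⟨a, ha, List.mem_flatMap.2 ⟨b, hb, List.mem_flatMap.2 ⟨c, hc,
        List.mem_map.2 ⟨d, hd, rfl⟩⟩⟩⟩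
    · obtain ⟨e, he, rfl⟩ := sign_cast hx
      obtain ⟨n, hn, rfl⟩ := sign_cast hy
      have key : ∀ p ∈ [((⟨0,e⟩,⟨0,n⟩,0,0) : Coord), (⟨0,e⟩,0,⟨0,n⟩,0), (⟨0,e⟩,0,0,⟨0,n⟩),
          (0,⟨0,e⟩,⟨0,n⟩,0), (0,⟨0,e⟩,0,⟨0,n⟩), (0,0,⟨0,e⟩,⟨0,n⟩)], p ∈ listAll := fun p hp =>
        List.mem_append_right _ (List.mem_append_right _ (List.mem_flatMap.2 ⟨e, he,
          List.mem_flatMap.2 ⟨n, hn, hp⟩⟩))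
      fin_cases a <;> fin_cases b <;> first | (exfalso; revert hab; decide) | skip
      · refine ⟨_, key (⟨0,e⟩,⟨0,n⟩,0,0) (by simp), ?_⟩
        ext <;> simp only [toQ_re, toQ_imI, toQ_imJ, toQ_imK, emb_sqrt, emb_zero_div] <;>
          simp [quatBasis_re, quatBasis_imI, quatBasis_imJ, quatBasis_imK]
      · refine ⟨_, key (⟨0,e⟩,0,⟨0,n⟩,0) (by simp), ?_⟩
        ext <;> simp only [toQ_re, toQ_imI, toQ_imJ, toQ_imK, emb_sqrt, emb_zero_div] <;>
          simp [quatBasis_re, quatBasis_imI, quatBasis_imJ, quatBasis_imK]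
      · refine ⟨_, key (⟨0,e⟩,0,0,⟨0,n⟩) (by simp), ?_⟩
        ext <;> simp only [toQ_re, toQ_imI, toQ_imJ, toQ_imK, emb_sqrt, emb_zero_div] <;>
          simp [quatBasis_re, quatBasis_imI, quatBasis_imJ, quatBasis_imK]
      · refine ⟨_, key (0,⟨0,e⟩,⟨0,n⟩,0) (by simp), ?_⟩
        ext <;> simp only [toQ_re, toQ_imI, toQ_imJ, toQ_imK, emb_sqrt, emb_zero_div] <;>
          simp [quatBasis_re, quatBasis_imI, quatBasis_imJ, quatBasis_imK]
      · refine ⟨_, key (0,⟨0,e⟩,0,⟨0,n⟩) (by simp), ?_⟩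
        ext <;> simp only [toQ_re, toQ_imI, toQ_imJ, toQ_imK, emb_sqrt, emb_zero_div] <;>
          simp [quatBasis_re, quatBasis_imI, quatBasis_imJ, quatBasis_imK]
      · refine ⟨_, key (0,0,⟨0,e⟩,⟨0,n⟩) (by simp), ?_⟩
        ext <;> simp only [toQ_re, toQ_imI, toQ_imJ, toQ_imK, emb_sqrt, emb_zero_div] <;>
          simp [quatBasis_re, quatBasis_imI, quatBasis_imJ, quatBasis_imK]
  · rintro ⟨p, hp, rfl⟩
    rcases List.mem_append.1 hp with hp | hp
    · obtain ⟨e, he, hp⟩ := List.mem_flatMap.1 hp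
      refine Or.inl (Or.inl ⟨e, sign_real he, ?_⟩)
      simp only [List.mem_cons, List.not_mem_nil, or_false] at hp
      rcases hp with rfl | rfl | rfl | rfl <;> simp only [toQ, emb_two, emb_zero_div]
      · exact Or.inl rfl
      · exact Or.inr (Or.inl rfl)
      · exact Or.inr (Or.inr (Or.inl rfl))
      · exact Or.inr (Or.inr (Or.inr rfl))
    · rcases List.mem_append.1 hp with hp | hp
      · obtain ⟨a, ha, hp⟩ := List.mem_flatMap.1 hp
        obtain ⟨b, hb, hp⟩ := List.mem_flatMap.1 hp
        obtain ⟨c, hc, hp⟩ := List.mem_flatMap.1 hp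
        obtain ⟨d, hd, rfl⟩ := List.mem_map.1 hp
        refine Or.inl (Or.inr ⟨_, _, _, _, sign_real_half ha, sign_real_half hb,
          sign_real_half hc, sign_real_half hd, ?_⟩)
        simp only [toQ, emb_one]
        rfl
      · obtain ⟨e, he, hp⟩ := List.mem_flatMap.1 hp
        obtain ⟨n, hn, hp⟩ := List.mem_flatMap.1 hp
        have key : ∀ a b : Fin 4, a < b →
            toQ p = (√2)⁻¹ • ((e : ℝ) • quatBasis a + (n : ℝ) • quatBasis b) →
            toQ p ∈ binTet ∪ octExtra := fun a b hab h =>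
          Or.inr ⟨a, b, hab, e, n, sign_real he, sign_real hn, h⟩
        simp only [List.mem_cons, List.not_mem_nil, or_false] at hp
        rcases hp with rfl | rfl | rfl | rfl | rfl | rfl
        · refine key 0 1 (by decide) ?_
          ext <;> simp only [toQ_re, toQ_imI, toQ_imJ, toQ_imK, emb_sqrt, emb_zero_div] <;>
          simp [quatBasis_re, quatBasis_imI, quatBasis_imJ, quatBasis_imK]
        · refine key 0 2 (by decide) ?_
          ext <;> simp only [toQ_re, toQ_imI, toQ_imJ, toQ_imK, emb_sqrt, emb_zero_div] <;>
          simp [quatBasis_re, quatBasis_imI, quatBasis_imJ, quatBasis_imK]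
        · refine key 0 3 (by decide) ?_
          ext <;> simp only [toQ_re, toQ_imI, toQ_imJ, toQ_imK, emb_sqrt, emb_zero_div] <;>
          simp [quatBasis_re, quatBasis_imI, quatBasis_imJ, quatBasis_imK]
        · refine key 1 2 (by decide) ?_
          ext <;> simp only [toQ_re, toQ_imI, toQ_imJ, toQ_imK, emb_sqrt, emb_zero_div] <;>
          simp [quatBasis_re, quatBasis_imI, quatBasis_imJ, quatBasis_imK]
        · refine key 1 3 (by decide) ?_
          ext <;> simp only [toQ_re, toQ_imI, toQ_imJ, toQ_imK, emb_sqrt, emb_zero_div] <;>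
          simp [quatBasis_re, quatBasis_imI, quatBasis_imJ, quatBasis_imK]
        · refine key 2 3 (by decide) ?_
          ext <;> simp only [toQ_re, toQ_imI, toQ_imJ, toQ_imK, emb_sqrt, emb_zero_div] <;>
          simp [quatBasis_re, quatBasis_imI, quatBasis_imJ, quatBasis_imK]

/-- Left multiplication by the members of a list preserves the set. -/
def Good (l : List Coord) : Prop :=
  ∀ p ∈ l, ∀ q ∈ binTet ∪ octExtra, toQ p * q ∈ binTet ∪ octExtra

theorem good_gens : Good gens := by
  intro p hp q hqS
  obtain ⟨q, hq, rfl⟩ := (mem_iff _).1 hqS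
  obtain ⟨r, hr, h⟩ := gens_mul p hp q hq
  exact (mem_iff _).2 ⟨r, hr, (toQ_mul h).symm⟩

theorem good_of_fact {l m n : List Coord} (hm : Good m) (hn : Good n)
    (h : ∀ p ∈ l, ∃ x ∈ m, ∃ y ∈ n, cmul x y = cdouble p) : Good l := by
  intro p hp q hq
  obtain ⟨x, hx, y, hy, e⟩ := h p hp
  rw [← toQ_mul e, mul_assoc]
  exact hm x hx _ (hn y hy q hq)

theorem good_all : Good listAll := by
  have hA := good_of_fact good_gens good_gens gensA_fact
  have hR := good_of_fact good_gens good_gens gensR_fact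
  exact good_of_fact (good_of_fact hA hA listA_fact) (good_of_fact hR hR reps_fact) listAll_fact

theorem mem_mul {p q : ℍ[ℝ]} (hpS : p ∈ binTet ∪ octExtra) (hqS : q ∈ binTet ∪ octExtra) :
    p * q ∈ binTet ∪ octExtra := by
  obtain ⟨p, hp, rfl⟩ := (mem_iff _).1 hpS
  exact good_all p hp q hqS

theorem mem_neg {p : ℍ[ℝ]} (hpS : p ∈ binTet ∪ octExtra) : -p ∈ binTet ∪ octExtra := by
  obtain ⟨p, hp, rfl⟩ := (mem_iff _).1 hpS
  exact (mem_iff _).2 ⟨_, list_neg p hp, toQ_neg p⟩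

theorem mem_star {p : ℍ[ℝ]} (hpS : p ∈ binTet ∪ octExtra) : star p ∈ binTet ∪ octExtra := by
  obtain ⟨p, hp, rfl⟩ := (mem_iff _).1 hpS
  exact (mem_iff _).2 ⟨_, list_star p hp, toQ_star p⟩

theorem mem_normSq {p : ℍ[ℝ]} (hpS : p ∈ binTet ∪ octExtra) : normSq p = 1 := by
  obtain ⟨p, hp, rfl⟩ := (mem_iff _).1 hpS
  exact toQ_normSq hp

theorem set_ncard : (binTet ∪ octExtra).ncard = 48 := by
  have h : binTet ∪ octExtra = toQ '' (listAll.toFinset : Set Coord) := by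
    ext q
    rw [mem_iff]
    simp
  rw [h, Set.ncard_image_of_injective _ toQ_injective, Set.ncard_coe_finset,
    List.toFinset_card_of_nodup list_nodup]
  decide +kernel

/-- The binary octahedral group `2O = 2T ∪ {(±e_a±e_b)/√2}` is closed under quaternion
multiplication, is a group of order 48, and as a set of vectors in ℝ⁴ forms the `F₄`
root system in the generalized sense. -/
theorem binaryOctahedral_group_and_F4_root_system :
    (∀ p ∈ binTet ∪ octExtra, ∀ q ∈ binTet ∪ octExtra, p * q ∈ binTet ∪ octExtra) ∧
    (1 : ℍ[ℝ]) ∈ binTet ∪ octExtra ∧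
    (∀ p ∈ binTet ∪ octExtra, p⁻¹ ∈ binTet ∪ octExtra) ∧
    (binTet ∪ octExtra).ncard = 48 ∧
    (∀ q ∈ binTet ∪ octExtra, -q ∈ binTet ∪ octExtra) ∧
    (∀ q ∈ binTet ∪ octExtra, ∀ t : ℝ, t • q ∈ binTet ∪ octExtra → t = 1 ∨ t = -1) ∧
    (∀ p ∈ binTet ∪ octExtra, ∀ q ∈ binTet ∪ octExtra,
      q - (2 * (p * star q).re / (p * star p).re) • p ∈ binTet ∪ octExtra) := by
  refine ⟨fun p hp q hq => mem_mul hp hq, ?_, ?_, set_ncard, fun q hq => mem_neg hq, ?_, ?_⟩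
  · refine Or.inl (Or.inl ⟨1, Or.inl rfl, Or.inl ?_⟩)
    ext <;> simp
  · intro p hp
    have h : p⁻¹ = star p := by
      rw [Quaternion.inv_def, mem_normSq hp]; simp
    rw [h]
    exact mem_star hp
  · intro q hq t ht
    have h := mem_normSq ht
    rw [Quaternion.normSq_smul, mem_normSq hq, mul_one] at h
    simpa using h
  · intro p hp q hq
    have hn := mem_normSq hp
    have h1 : (p * star p).re = 1 := hn
    have h2 : q - (2 * (p * star q).re / (p * star p).re) • p = -(p * star q * p) := by
      rw [h1, div_one]
      rw [Quaternion.normSq_def'] at hn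
      ext <;> simp
      · linear_combination (-q.re) * hn
      · linear_combination (-q.imI) * hn
      · linear_combination (-q.imJ) * hn
      · linear_combination (-q.imK) * hn
    rw [h2]
    exact mem_neg (mem_mul (mem_mul hp (mem_star hq)) hp)
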